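/- For all integers N ≥ 0 and h ≥ 1, the odd q-super Catalan numbers satisfy the recurrence C_{N,N+h}(q) = Σ_{k=0}^{⌊(h-1)/2⌋} C_{N,k}(q) · Σ_{j=k}^{h-k-1} q^{k(N+k+1) + j(N+j+1)} · [h-1 choose 2k] · [h-2k-1 choose j-k]. -/

import Mathlib

open Finset

noncomputable section

/-- The variable `q`, as a rational function over `ℚ`. -/
def q : RatFunc ℚ := RatFunc.X

/-- The `q`-integer `[n] = (1 - q^n)/(1 - q)`. -/
def qint (n : ℕ) : RatFunc ℚ := (1 - q ^ n) / (1 - q)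

/-- The `q`-factorial `[n]! = [1][2]⋯[n]`, with `[0]! = 1`. -/
def qfact (n : ℕ) : RatFunc ℚ := ∏ i ∈ Finset.range n, qint (i + 1)

/-- The Gaussian (q-binomial) coefficient `[N choose K]`, equal to
`[N]!/([K]![N-K]!)` if `0 ≤ K ≤ N`, and `0` otherwise. -/
def qbinom (N K : ℤ) : RatFunc ℚ :=
  if 0 ≤ K ∧ K ≤ N then qfact N.toNat / (qfact K.toNat * qfact (N - K).toNat) else 0

/-- The odd `q`-super Catalan number
`C_{m,n}(q) = [2m+1]! [2n]! / ([m+n+1]! [m]! [n]!)`. -/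
def C (m n : ℕ) : RatFunc ℚ :=
  qfact (2 * m + 1) * qfact (2 * n) / (qfact (m + n + 1) * qfact m * qfact n)

/-!
Up to a common factor, `C_{N,N+h}(q)` is the Gaussian coefficient `[2(N+h) choose h-1]`. Expanding
it by the `q`-Vandermonde convolution produces the sum over `j`; expanding one factor of each term
by `q`-Vandermonde again produces the sum over `k`. Written in `q`-factorials, each term of the
resulting double sum is the corresponding term of the recurrence.
-/

section GaussBinom

variable {R : Type*} [CommSemiring R]

/-- The Gaussian coefficient `[n choose k]` at the base `x`, for natural numbers `n` and `k`. It is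
defined by the `q`-Pascal rule, so that it makes sense in any commutative semiring and needs no
division; `qbinom_natCast` identifies it at `x = q` with the quotient of `q`-factorials. -/
def gaussBinom (x : R) : ℕ → ℕ → R
  | _, 0 => 1
  | 0, _ + 1 => 0
  | n + 1, k + 1 => gaussBinom x n k + x ^ (k + 1) * gaussBinom x n (k + 1)

@[simp]
theorem gaussBinom_zero_right (x : R) (n : ℕ) : gaussBinom x n 0 = 1 := by
  cases n <;> rfl

@[simp]
theorem gaussBinom_zero_succ (x : R) (k : ℕ) : gaussBinom x 0 (k + 1) = 0 := rfl

theorem gaussBinom_succ_succ (x : R) (n k : ℕ) :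
    gaussBinom x (n + 1) (k + 1) = gaussBinom x n k + x ^ (k + 1) * gaussBinom x n (k + 1) := rfl

theorem gaussBinom_eq_zero_of_lt (x : R) {n k : ℕ} (h : n < k) : gaussBinom x n k = 0 := by
  induction n generalizing k with
  | zero => obtain ⟨k, rfl⟩ := Nat.exists_eq_add_one.mpr h; rfl
  | succ n ih =>
    obtain ⟨k, rfl⟩ := Nat.exists_eq_add_one.mpr (Nat.zero_lt_of_lt h)
    rw [gaussBinom_succ_succ, ih (by omega), ih (by omega), mul_zero, add_zero]

/-- The truncation of `m - p.1` is harmless: `gaussBinom x m p.1` vanishes for `m < p.1`. -/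
theorem gaussBinom_add_eq_sum_antidiagonal (x : R) (m n k : ℕ) :
    gaussBinom x (m + n) k =
      ∑ p ∈ antidiagonal k, x ^ ((m - p.1) * p.2) * gaussBinom x m p.1 * gaussBinom x n p.2 := by
  induction m generalizing k with
  | zero =>
    cases k with
    | zero => simp
    | succ k => simp [Nat.sum_antidiagonal_succ]
  | succ m ih =>
    cases k with
    | zero => simp
    | succ k =>
      have pascal_term : ∀ p ∈ antidiagonal k,
          x ^ ((m + 1 - (p.1 + 1)) * p.2) * gaussBinom x (m + 1) (p.1 + 1) * gaussBinom x n p.2 =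
            x ^ ((m - p.1) * p.2) * gaussBinom x m p.1 * gaussBinom x n p.2 +
              x ^ (k + 1) * (x ^ ((m - (p.1 + 1)) * p.2) * gaussBinom x m (p.1 + 1) *
                gaussBinom x n p.2) := by
        rintro ⟨i, j⟩ hij
        obtain rfl : i + j = k := mem_antidiagonal.mp hij
        rw [gaussBinom_succ_succ, Nat.add_sub_add_right]
        rcases lt_or_ge m (i + 1) with hi | hi
        · rw [gaussBinom_eq_zero_of_lt x hi]
          ring
        · obtain ⟨d, rfl⟩ := Nat.exists_eq_add_of_le hi
          rw [Nat.add_sub_cancel_left, show i + 1 + d - i = d + 1 by omega]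
          ring
      rw [Nat.sum_antidiagonal_succ, sum_congr rfl pascal_term, sum_add_distrib, ← ih k,
        ← mul_sum, Nat.add_right_comm, gaussBinom_succ_succ, ih (k + 1),
        Nat.sum_antidiagonal_succ]
      simp only [Nat.sub_zero, gaussBinom_zero_right]
      ring

theorem gaussBinom_add_eq_sum_range (x : R) (a j n : ℕ) :
    gaussBinom x (a + j + n) j =
      ∑ k ∈ range (min j n + 1),
        x ^ (k * (a + k)) * gaussBinom x (a + j) (j - k) * gaussBinom x n k := by
  rw [gaussBinom_add_eq_sum_antidiagonal, ← Nat.sum_antidiagonal_swap,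
    Nat.sum_antidiagonal_eq_sum_range_succ_mk]
  have hsub : range (min j n + 1) ⊆ range j.succ := range_mono (by omega)
  rw [← sum_subset hsub]
  · refine sum_congr rfl fun k hk => ?_
    have hk : k ≤ j := by rw [mem_range] at hk; omega
    rw [Prod.swap_prod_mk, show a + j - (j - k) = a + k by omega, mul_comm (a + k)]
  · intro k hkj hkn
    rw [mem_range] at hkj hkn
    simp [gaussBinom_eq_zero_of_lt x (show n < k by omega)]

theorem gaussBinom_add_eq_sum_sum (x : R) (a b M : ℕ) :
    gaussBinom x (a + M + (b + M)) M =
      ∑ k ∈ range (M / 2 + 1), ∑ j ∈ Icc k (M - k),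
        x ^ (k * (b + k) + j * (a + j)) * (gaussBinom x (a + M) (M - j) *
          gaussBinom x (b + j) (j - k) * gaussBinom x (M - j) k) := by
  have hcomm : ∀ k j, k ∈ range (M / 2 + 1) ∧ j ∈ Icc k (M - k) ↔
      k ∈ range (min j (M - j) + 1) ∧ j ∈ range (M + 1) := by
    intro k j
    simp only [mem_range, mem_Icc]
    omega
  rw [gaussBinom_add_eq_sum_range, min_eq_left (Nat.le_add_left M b), sum_comm' hcomm]
  refine sum_congr rfl fun j hj => ?_
  have hj : b + M = b + j + (M - j) := by rw [mem_range] at hj; omega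
  rw [hj, gaussBinom_add_eq_sum_range, mul_sum]
  exact sum_congr rfl fun k _ => by ring

end GaussBinom

theorem ratFunc_X_pow_ne_one {K : Type*} [Field K] {n : ℕ} (hn : n ≠ 0) :
    (RatFunc.X : RatFunc K) ^ n ≠ 1 := fun h =>
  (RatFunc.transcendental_X (K := K)).pow (Nat.pos_of_ne_zero hn) (h ▸ isAlgebraic_one)

theorem one_sub_q_pow_ne_zero {n : ℕ} (hn : n ≠ 0) : 1 - q ^ n ≠ 0 :=
  sub_ne_zero.mpr (ratFunc_X_pow_ne_one hn).symm

theorem qint_ne_zero {n : ℕ} (hn : n ≠ 0) : qint n ≠ 0 :=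
  div_ne_zero (one_sub_q_pow_ne_zero hn) (by simpa using one_sub_q_pow_ne_zero one_ne_zero)

theorem qint_add (m n : ℕ) : qint (m + n) = qint m + q ^ m * qint n := by
  simp only [qint]
  ring

@[simp]
theorem qfact_zero : qfact 0 = 1 := prod_range_zero _

theorem qfact_succ (n : ℕ) : qfact (n + 1) = qfact n * qint (n + 1) := prod_range_succ _ _

theorem qfact_ne_zero (n : ℕ) : qfact n ≠ 0 :=
  prod_ne_zero_iff.mpr fun i _ => qint_ne_zero i.succ_ne_zero

theorem gaussBinom_mul_qfact_mul_qfact (k l : ℕ) :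
    gaussBinom q (k + l) k * qfact k * qfact l = qfact (k + l) := by
  induction k generalizing l with
  | zero => simp
  | succ k ihk =>
    induction l with
    | zero =>
      have hk : gaussBinom q k k * qfact k = qfact k := by simpa using ihk 0
      rw [add_zero, gaussBinom_succ_succ, gaussBinom_eq_zero_of_lt q k.lt_succ_self, qfact_succ,
        qfact_zero]
      linear_combination qint (k + 1) * hk
    | succ l ihl =>
      have hk : gaussBinom q (k + 1 + l) k * qfact k * (qfact l * qint (l + 1)) =
          qfact (k + 1 + l) := by
        rw [← qfact_succ, Nat.add_right_comm]
        exact ihk (l + 1)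
      have hsucc : qfact (k + 1 + (l + 1)) =
          qfact (k + 1 + l) * (qint (k + 1) + q ^ (k + 1) * qint (l + 1)) := by
        rw [← qint_add, ← add_assoc, qfact_succ]
      rw [hsucc, ← add_assoc, gaussBinom_succ_succ, qfact_succ l]
      rw [qfact_succ k] at ihl ⊢
      linear_combination q ^ (k + 1) * qint (l + 1) * ihl + qint (k + 1) * hk

theorem gaussBinom_add_eq_div (k l : ℕ) :
    gaussBinom q (k + l) k = qfact (k + l) / (qfact k * qfact l) := by
  rw [eq_div_iff (mul_ne_zero (qfact_ne_zero k) (qfact_ne_zero l)), ← mul_assoc,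
    gaussBinom_mul_qfact_mul_qfact]

theorem qbinom_natCast (n k : ℕ) : qbinom n k = gaussBinom q n k := by
  rcases le_or_gt k n with hkn | hnk
  · obtain ⟨l, rfl⟩ := Nat.exists_eq_add_of_le hkn
    rw [qbinom, if_pos (by omega), gaussBinom_add_eq_div, Int.toNat_natCast, Int.toNat_natCast,
      show ((k + l : ℕ) - k : ℤ).toNat = l by omega]
  · rw [qbinom, if_neg (by omega), gaussBinom_eq_zero_of_lt q hnk]

theorem C_add_succ (N M : ℕ) :
    C N (N + (M + 1)) = qfact (2 * N + 1) * qfact M / (qfact N * qfact (N + 1 + M)) *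
      gaussBinom q (N + 1 + M + (N + 1 + M)) M := by
  rw [show N + 1 + M + (N + 1 + M) = M + (N + (N + (M + 1)) + 1) by ring, gaussBinom_add_eq_div, C,
    show 2 * (N + (M + 1)) = M + (N + (N + (M + 1)) + 1) by ring,
    show N + (M + 1) = N + 1 + M by ring]
  have := qfact_ne_zero M
  field_simp

theorem C_mul_gaussBinom_mul_gaussBinom (N : ℕ) {k j M : ℕ} (hkj : k ≤ j) (hjM : k + j ≤ M) :
    C N k * (gaussBinom q M (2 * k) * gaussBinom q (M - 2 * k) (j - k)) =
      qfact (2 * N + 1) * qfact M / (qfact N * qfact (N + 1 + M)) *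
        (gaussBinom q (N + 1 + M) (M - j) * gaussBinom q (N + 1 + j) (j - k) *
          gaussBinom q (M - j) k) := by
  obtain ⟨i, rfl⟩ := Nat.exists_eq_add_of_le hkj
  obtain ⟨l, rfl⟩ : ∃ l, M = 2 * k + (i + l) := ⟨M - (2 * k + i), by omega⟩
  rw [show 2 * k + (i + l) - (k + i) = k + l by omega,
    show N + 1 + (2 * k + (i + l)) = (k + l) + (i + (N + k + 1)) by ring,
    show N + 1 + (k + i) = i + (N + k + 1) by ring, Nat.add_sub_cancel_left,
    Nat.add_sub_cancel_left]
  simp only [gaussBinom_add_eq_div, C]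
  have h₁ := qfact_ne_zero (2 * k)
  have h₂ := qfact_ne_zero (i + l)
  have h₃ := qfact_ne_zero (k + l)
  have h₄ := qfact_ne_zero (i + (N + k + 1))
  have h₅ := qfact_ne_zero (k + l + (i + (N + k + 1)))
  field_simp

/-- For all integers `N ≥ 0` and `h ≥ 1`,
`C_{N,N+h}(q) = Σ_{k=0}^{⌊(h-1)/2⌋} C_{N,k}(q)
  Σ_{j=k}^{h-k-1} q^{k(N+k+1)+j(N+j+1)} [h-1 choose 2k] [h-2k-1 choose j-k]`. -/
theorem backward_recurrence (N h : ℕ) (hh : 1 ≤ h) :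
    C N (N + h) =
      ∑ k ∈ Finset.range ((h - 1) / 2 + 1),
        C N k *
          ∑ j ∈ Finset.Icc k (h - k - 1),
            q ^ (k * (N + k + 1) + j * (N + j + 1)) *
              qbinom ((h : ℤ) - 1) (2 * (k : ℤ)) *
              qbinom ((h : ℤ) - 2 * k - 1) ((j : ℤ) - k) := by
  obtain ⟨M, rfl⟩ := Nat.exists_eq_add_of_le' hh
  have hbound : ∀ k, M + 1 - k - 1 = M - k := by omega
  simp only [C_add_succ, gaussBinom_add_eq_sum_sum, mul_sum, Nat.add_sub_cancel, hbound]
  refine sum_congr rfl fun k _ => sum_congr rfl fun j hj => ?_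
  obtain ⟨hkj, hjM⟩ : k ≤ j ∧ k + j ≤ M := by rw [mem_Icc] at hj; omega
  have hbinom₁ : qbinom ((M + 1 : ℕ) - 1) (2 * k) = gaussBinom q M (2 * k) := by
    rw [← qbinom_natCast]
    congr 1
    omega
  have hbinom₂ : qbinom ((M + 1 : ℕ) - 2 * k - 1) (j - k) = gaussBinom q (M - 2 * k) (j - k) := by
    rw [← qbinom_natCast]
    congr 1 <;> omega
  rw [hbinom₁, hbinom₂, Nat.add_right_comm N k 1, Nat.add_right_comm N j 1]
  linear_combination -q ^ (k * (N + 1 + k) + j * (N + 1 + j)) *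
    C_mul_gaussBinom_mul_gaussBinom N hkj hjM

end
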